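/- Let f : ℝⁿ → ℝ, let τ > 0, and let r : ℝⁿ → ℝ be separable, r(x) = Σᵢ rᵢ(xᵢ), where each rᵢ : ℝ → ℝ is convex, satisfies rᵢ(0) = 0, and rᵢ(t) ≥ 0 for all t ≥ 0. Define g(y,z) = f(y − z) + τ·Σᵢ(yᵢ + zᵢ) + r(y) + r(−z), and let F(x) = f(x) + τ‖x‖₁ + r(x). If (y*, z*) minimizes g over the set {(y,z) : y ≥ 0, z ≥ 0}, then the optimal values of the two problems coincide: g(y*, z*) = F(y* − z*) = min_{x ∈ ℝⁿ} F(x). -/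

import Mathlib

theorem aux_sub (r : ℝ → ℝ) (hc : ConvexOn ℝ Set.univ r) (h0 : r 0 = 0) (y z : ℝ)
    (hy : 0 ≤ y) (hz : 0 ≤ z) : r (y - z) ≤ r y + r (-z) := by
  rcases eq_or_lt_of_le (add_nonneg hy hz) with h | h
  · have h1 : y = 0 := by linarith
    have h2 : z = 0 := by linarith
    simp [h1, h2, h0]
  · have hne : y + z ≠ 0 := h.ne'
    have ha : 0 ≤ y / (y + z) := by positivity
    have hb : 0 ≤ z / (y + z) := by positivity
    have hab : y / (y + z) + z / (y + z) = 1 := by field_simp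
    have h1 := hc.2 (Set.mem_univ y) (Set.mem_univ (-z)) ha hb hab
    have h2 := hc.2 (Set.mem_univ (-z)) (Set.mem_univ y) ha hb hab
    simp only [smul_eq_mul] at h1 h2
    have e1 : y / (y + z) * y + z / (y + z) * (-z) = y - z := by
      field_simp; ring
    have e2 : y / (y + z) * (-z) + z / (y + z) * y = 0 := by
      field_simp; ring
    rw [e1] at h1
    rw [e2, h0] at h2
    have hb' : z / (y + z) = 1 - y / (y + z) := by linarith
    rw [hb'] at h1 h2
    linarith

/-- Equality of optimal values: under the assumptions of Lemma 1, if `(y*, z*)`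
minimizes `g(y,z) = f(y-z) + τ·Σᵢ(yᵢ+zᵢ) + r(y) + r(-z)` over
`{(y,z) : y ≥ 0, z ≥ 0}`, then `g(y*,z*) = F(y* - z*)` and `F(y* - z*)` is the
minimum of `F(x) = f(x) + τ‖x‖₁ + r(x)` over `ℝⁿ`. -/
theorem stmt_15 (n : ℕ) (f : (Fin n → ℝ) → ℝ) (τ : ℝ) (hτ : 0 < τ)
    (r : Fin n → ℝ → ℝ)
    (hconv : ∀ i, ConvexOn ℝ Set.univ (r i))
    (hzero : ∀ i, r i 0 = 0)
    (hnonneg : ∀ i (t : ℝ), 0 ≤ t → 0 ≤ r i t)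
    (g : (Fin n → ℝ) → (Fin n → ℝ) → ℝ)
    (hg : ∀ y z, g y z =
      f (y - z) + τ * (∑ i, (y i + z i)) + (∑ i, r i (y i)) + (∑ i, r i (-(z i))))
    (F : (Fin n → ℝ) → ℝ)
    (hF : ∀ x, F x = f x + τ * (∑ i, |x i|) + (∑ i, r i (x i)))
    (ystar zstar : Fin n → ℝ)
    (hy : ∀ i, 0 ≤ ystar i) (hz : ∀ i, 0 ≤ zstar i)
    (hmin : ∀ y z : Fin n → ℝ, (∀ i, 0 ≤ y i) → (∀ i, 0 ≤ z i) →
      g ystar zstar ≤ g y z) :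
    g ystar zstar = F (ystar - zstar) ∧
    (∀ x : Fin n → ℝ, F (ystar - zstar) ≤ F x) := by
  have key : ∀ x : Fin n → ℝ, g ystar zstar ≤ F x := by
    intro x
    have h := hmin (fun i => max (x i) 0) (fun i => max (-(x i)) 0)
      (fun i => le_max_right _ _) (fun i => le_max_right _ _)
    refine h.trans (le_of_eq ?_)
    rw [hg, hF, add_assoc, ← Finset.sum_add_distrib]
    congr 1
    · congr 1
      · congr 1
        funext i
        rcases le_total 0 (x i) with hx | hx <;> simp [hx]
      · congr 1
        refine Finset.sum_congr rfl fun i _ => ?_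
        rcases le_total 0 (x i) with hx | hx <;> simp [hx, abs_of_nonneg, abs_of_nonpos]
    · refine Finset.sum_congr rfl fun i _ => ?_
      rcases le_total 0 (x i) with hx | hx <;> simp [hx, hzero]
  have low : F (ystar - zstar) ≤ g ystar zstar := by
    rw [hg, hF, add_assoc _ (∑ i, r i (ystar i)), ← Finset.sum_add_distrib]
    have a1 : ∑ i, |(ystar - zstar) i| ≤ ∑ i, (ystar i + zstar i) := by
      refine Finset.sum_le_sum fun i _ => ?_
      have := hy i
      have := hz i
      rw [Pi.sub_apply, abs_le]
      constructor <;> linarith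
    have a2 : ∑ i, r i ((ystar - zstar) i) ≤ ∑ i, (r i (ystar i) + r i (-(zstar i))) :=
      Finset.sum_le_sum fun i _ => aux_sub (r i) (hconv i) (hzero i) _ _ (hy i) (hz i)
    have a3 := mul_le_mul_of_nonneg_left a1 hτ.le
    linarith
  exact ⟨le_antisymm (key _) low, fun x => low.trans (key x)⟩
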